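/- Let A and B be n×n complex positive semidefinite matrices and let t ∈ [0,1]. Then for every j = 1, …, n, λ_j((1−t)A + tB) ≥ λ_j(A^{(1−t)/2} B^{t} A^{(1−t)/2}); in other words, the j-th largest eigenvalue of the weighted arithmetic mean dominates the j-th largest eigenvalue of A^{1−t}B^{t}. -/

import Mathlib

/-!
All estimates are between Rayleigh quotients `R_M(x) = ⟪M x, x⟫ / ‖x‖²`. Put
`H = A ^ ((1 - t) / 2)`, `N = H B ^ t H` and `M = (1 - t) A + t B`. A dimension count in the style
of Courant–Fischer gives `y` with `λ_j(N) ≤ R_N(y)` and `R_M(H y) ≤ λ_j(M)`. With `x = H y`,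
Cauchy–Schwarz, Jensen's inequality for the spectral distributions of `A` and `B` at `x`, and the
scalar Young inequality give
`R_N(y) ≤ R_{A ^ (1 - t)}(x) R_{B ^ t}(x) ≤ R_A(x) ^ (1 - t) R_B(x) ^ t ≤ R_M(x)`.
-/

open Matrix
open scoped Classical ComplexOrder

/-- `eigDesc A j` is the `j`-th largest eigenvalue (1-based) of the Hermitian matrix `A`. -/
noncomputable def eigDesc {m : Type*} [Fintype m] [DecidableEq m] (A : Matrix m m ℂ) (j : ℕ) : ℝ :=
  if h : A.IsHermitian then
    ((Finset.univ.val.map h.eigenvalues).sort (· ≤ ·)).getD (Fintype.card m - j) 0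
  else 0

/-- `singDesc M j` is the `j`-th largest singular value (1-based) of `M`, i.e. the square root
of the `j`-th largest eigenvalue of `Mᴴ * M`. -/
noncomputable def singDesc {m : Type*} [Fintype m] [DecidableEq m] (M : Matrix m m ℂ) (j : ℕ) : ℝ :=
  Real.sqrt (eigDesc (Mᴴ * M) j)

/-- `matPow A s` is the power `A ^ s` of a positive semidefinite matrix `A`, defined via the
spectral decomposition of `A` (junk value `0` if `A` is not positive semidefinite). -/
noncomputable def matPow {m : Type*} [Fintype m] [DecidableEq m] (A : Matrix m m ℂ) (s : ℝ) :
    Matrix m m ℂ :=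
  if h : A.PosSemidef then
    (h.1.eigenvectorUnitary : Matrix m m ℂ) *
      Matrix.diagonal (fun i => ((h.1.eigenvalues i ^ s : ℝ) : ℂ)) *
      (h.1.eigenvectorUnitary : Matrix m m ℂ)ᴴ
  else 0

section OrderStatistics

variable {α : Type*} [Preorder α] {l : List α} {p : α → Bool} {a : ℕ}

lemma lt_countP_of_forall_le_getElem (hl : l.Pairwise (· ≤ ·)) (ha : a < l.length)
    (hp : ∀ x ≤ l[a], p x) : a < l.countP p := by
  have htake : ∀ x ∈ l.take (a + 1), p x := by
    intro x hx
    obtain ⟨i, hi, rfl⟩ := List.mem_take_iff_getElem.mp hx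
    exact hp _ (hl.rel_get_of_le (a := ⟨i, by omega⟩) (b := ⟨a, ha⟩) (Fin.mk_le_mk.mpr (by omega)))
  calc a < (l.take (a + 1)).length := by rw [List.length_take]; omega
    _ = (l.take (a + 1)).countP p := (List.countP_eq_length.mpr htake).symm
    _ ≤ l.countP p := (List.take_sublist _ _).countP_le

lemma length_le_add_countP_of_forall_getElem_le (hl : l.Pairwise (· ≤ ·)) (ha : a < l.length)
    (hp : ∀ x, l[a] ≤ x → p x) : l.length ≤ a + l.countP p := by
  have hdrop : ∀ x ∈ l.drop a, p x := by
    intro x hx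
    obtain ⟨i, hi, rfl⟩ := List.mem_drop_iff_getElem.mp hx
    exact hp _ (hl.rel_get_of_le (a := ⟨a, ha⟩) (b := ⟨a + i, by omega⟩)
      (Fin.mk_le_mk.mpr (by omega)))
  calc l.length = a + (l.drop a).length := by rw [List.length_drop]; omega
    _ = a + (l.drop a).countP p := by rw [List.countP_eq_length.mpr hdrop]
    _ ≤ a + l.countP p := Nat.add_le_add_left (List.drop_sublist _ _).countP_le _

end OrderStatistics

lemma finrank_span_image_finset {R M ι : Type*} [Ring R] [Nontrivial R]
    [StrongRankCondition R] [AddCommGroup M] [Module R M] {v : ι → M}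
    (hv : LinearIndependent R v) (s : Finset ι) :
    Module.finrank R (Submodule.span R (v '' s)) = s.card := by
  rw [Set.image_eq_range]
  exact (finrank_span_eq_card (hv.comp _ Subtype.coe_injective)).trans (Fintype.card_coe s)

lemma exists_mem_ne_zero_map_mem {K V W : Type*} [DivisionRing K] [AddCommGroup V] [Module K V]
    [AddCommGroup W] [Module K W] [FiniteDimensional K V] [FiniteDimensional K W]
    (f : V →ₗ[K] W) {S : Submodule K V} {T : Submodule K W}
    (h : Module.finrank K W < Module.finrank K S + Module.finrank K T) :
    ∃ x ∈ S, x ≠ 0 ∧ f x ∈ T := by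
  have hquot : Module.finrank K (W ⧸ T) < Module.finrank K S := by
    have := T.finrank_quotient_add_finrank
    omega
  obtain ⟨⟨x, hxS⟩, hxf, hx⟩ := (Submodule.ne_bot_iff _).mp
    (LinearMap.ker_ne_bot_of_finrank_lt (f := (T.mkQ ∘ₗ f).domRestrict S) hquot)
  exact ⟨x, hxS, by simpa using hx, by simpa using hxf⟩

section Rayleigh

open ContinuousLinearMap

variable {𝕜 E F ι : Type*} [RCLike 𝕜] [NormedAddCommGroup E] [InnerProductSpace 𝕜 E]
  [NormedAddCommGroup F] [InnerProductSpace 𝕜 F] [Fintype ι]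

lemma rayleighQuotient_adjoint_conj_le [CompleteSpace E] [CompleteSpace F] (H : E →L[𝕜] F)
    (P : F →L[𝕜] F) {y : E} (hP : 0 ≤ P.rayleighQuotient (H y)) :
    (H.adjoint ∘L P ∘L H).rayleighQuotient y ≤
      (H ∘L H.adjoint).rayleighQuotient (H y) * P.rayleighQuotient (H y) := by
  rcases eq_or_ne (H y) 0 with hHy | hHy
  · simp [rayleighQuotient, reApplyInnerSelf_apply, hHy]
  have hy : y ≠ 0 := fun h => hHy (by rw [h, map_zero])
  have hconj : (H.adjoint ∘L P ∘L H).rayleighQuotient y =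
      ‖H y‖ ^ 2 / ‖y‖ ^ 2 * P.rayleighQuotient (H y) := by
    simp only [rayleighQuotient, reApplyInnerSelf_apply, ContinuousLinearMap.comp_apply,
      adjoint_inner_left]
    field_simp [norm_ne_zero_iff.mpr hHy]
  have hself : (H ∘L H.adjoint).rayleighQuotient (H y) =
      ‖H.adjoint (H y)‖ ^ 2 / ‖H y‖ ^ 2 := by
    rw [rayleighQuotient, reApplyInnerSelf_apply, ContinuousLinearMap.comp_apply,
      ← adjoint_inner_right, inner_self_eq_norm_sq]
  -- Cauchy–Schwarz, applied to `‖H y‖² = ⟪y, H† (H y)⟫`.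
  have hcs : ‖H y‖ ^ 2 ≤ ‖y‖ * ‖H.adjoint (H y)‖ := by
    rw [← inner_self_eq_norm_sq (𝕜 := 𝕜), ← adjoint_inner_right]
    exact re_inner_le_norm _ _
  rw [hconj, hself]
  gcongr ?_ * _
  rw [div_le_div_iff₀ (by positivity) (by positivity)]
  calc ‖H y‖ ^ 2 * ‖H y‖ ^ 2 ≤ (‖y‖ * ‖H.adjoint (H y)‖) * (‖y‖ * ‖H.adjoint (H y)‖) := by gcongr
    _ = ‖H.adjoint (H y)‖ ^ 2 * ‖y‖ ^ 2 := by ring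

variable {T : E →L[𝕜] E} {b : OrthonormalBasis ι 𝕜 E} {μ : ι → ℝ}

lemma reApplyInnerSelf_eq_sum (hT : ∀ i, T (b i) = (μ i : 𝕜) • b i) (x : E) :
    T.reApplyInnerSelf x = ∑ i, μ i * ‖inner 𝕜 (b i) x‖ ^ 2 := by
  have hTx : T x = ∑ i, inner 𝕜 (b i) x • (μ i : 𝕜) • b i := by
    conv_lhs => rw [← b.sum_repr' x, map_sum]
    simp only [map_smul, hT]
  rw [reApplyInnerSelf_apply, hTx, sum_inner, map_sum]
  refine Finset.sum_congr rfl fun i _ => ?_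
  rw [inner_smul_left, inner_smul_left, RCLike.conj_ofReal, mul_left_comm, RCLike.conj_mul]
  norm_cast

lemma rayleighQuotient_eq_sum (hT : ∀ i, T (b i) = (μ i : 𝕜) • b i) (x : E) :
    T.rayleighQuotient x = ∑ i, (‖inner 𝕜 (b i) x‖ ^ 2 / ‖x‖ ^ 2) * μ i := by
  rw [rayleighQuotient, reApplyInnerSelf_eq_sum hT, Finset.sum_div]
  exact Finset.sum_congr rfl fun i _ => by ring

lemma le_rayleighQuotient_of_mem_span (hT : ∀ i, T (b i) = (μ i : 𝕜) • b i) {s : Set ι} {c : ℝ}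
    (hc : ∀ i ∈ s, c ≤ μ i) {x : E} (hx : x ∈ Submodule.span 𝕜 (b '' s)) (hx0 : x ≠ 0) :
    c ≤ T.rayleighQuotient x := by
  have hcoord : ∀ i ∉ s, inner 𝕜 (b i) x = 0 := by
    intro i hi
    rw [← b.coe_toBasis, Module.Basis.mem_span_image] at hx
    rw [← b.repr_apply_apply, ← b.coe_toBasis_repr_apply]
    exact Finsupp.notMem_support_iff.mp fun h => hi (hx h)
  rw [rayleighQuotient, reApplyInnerSelf_eq_sum hT, le_div_iff₀ (by positivity),
    ← b.sum_sq_norm_inner_right, Finset.mul_sum]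
  refine Finset.sum_le_sum fun i _ => ?_
  by_cases hi : i ∈ s
  · gcongr
    exact hc i hi
  · simp [hcoord i hi]

lemma rayleighQuotient_le_of_mem_span (hT : ∀ i, T (b i) = (μ i : 𝕜) • b i) {s : Set ι} {c : ℝ}
    (hc : ∀ i ∈ s, μ i ≤ c) {x : E} (hx : x ∈ Submodule.span 𝕜 (b '' s)) (hx0 : x ≠ 0) :
    T.rayleighQuotient x ≤ c := by
  have hneg : ∀ i, (-T) (b i) = ((-μ i : ℝ) : 𝕜) • b i := fun i => by simp [hT]
  have h := le_rayleighQuotient_of_mem_span hneg (fun i hi => neg_le_neg (hc i hi)) hx hx0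
  rwa [rayleighQuotient_neg_apply, neg_le_neg_iff] at h

end Rayleigh

section Matrix

local notation "𝓛" => toEuclideanCLM (n := _) (𝕜 := ℂ)

variable {m : Type*} [Fintype m] [DecidableEq m]

/-- The Rayleigh quotient `⟪M x, x⟫ / ‖x‖²` of the matrix `M`; it is `0` at `x = 0`. -/
noncomputable abbrev rayleigh (M : Matrix m m ℂ) (x : EuclideanSpace ℂ m) : ℝ :=
  (𝓛 M).rayleighQuotient x

lemma rayleigh_add (M N : Matrix m m ℂ) (x : EuclideanSpace ℂ m) :
    rayleigh (M + N) x = rayleigh M x + rayleigh N x := by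
  rw [rayleigh, map_add, ContinuousLinearMap.rayleighQuotient_add]

lemma rayleigh_real_smul (c : ℝ) (M : Matrix m m ℂ) (x : EuclideanSpace ℂ m) :
    rayleigh (c • M) x = c * rayleigh M x := by
  have hsmul : 𝓛 (c • M) = (c : ℂ) • 𝓛 M := by
    rw [← map_smul, Complex.coe_smul]
  simp [rayleigh, hsmul, ContinuousLinearMap.rayleighQuotient,
    ContinuousLinearMap.reApplyInnerSelf_apply, mul_div_assoc]

lemma rayleigh_conjTranspose_mul_mul_le (H P : Matrix m m ℂ) {y : EuclideanSpace ℂ m}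
    (hP : 0 ≤ rayleigh P (𝓛 H y)) :
    rayleigh (Hᴴ * P * H) y ≤ rayleigh (H * Hᴴ) (𝓛 H y) * rayleigh P (𝓛 H y) := by
  have hconj : 𝓛 (Hᴴ * P * H) = (𝓛 H).adjoint ∘L 𝓛 P ∘L 𝓛 H := by
    rw [map_mul, map_mul, ← star_eq_conjTranspose, map_star]
    rfl
  have hself : 𝓛 (H * Hᴴ) = 𝓛 H ∘L (𝓛 H).adjoint := by
    rw [map_mul, ← star_eq_conjTranspose, map_star]
    rfl
  rw [rayleigh, rayleigh, hconj, hself]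
  exact rayleighQuotient_adjoint_conj_le _ _ hP

variable {A B M N : Matrix m m ℂ}

lemma rayleigh_nonneg (hM : M.PosSemidef) (x : EuclideanSpace ℂ m) : 0 ≤ rayleigh M x := by
  have hpos : (toEuclideanLin M).IsPositive := isPositive_toEuclideanLin_iff.mpr hM
  exact div_nonneg (hpos.re_inner_nonneg_left x) (sq_nonneg _)

lemma toEuclideanCLM_eigenvectorBasis (hM : M.IsHermitian) (i : m) :
    𝓛 M (hM.eigenvectorBasis i) = (hM.eigenvalues i : ℂ) • hM.eigenvectorBasis i := by
  apply WithLp.ofLp_injective 2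
  rw [ofLp_toEuclideanCLM, hM.mulVec_eigenvectorBasis, WithLp.ofLp_smul, Complex.coe_smul]

/-- The eigenvalues of a Hermitian matrix, with multiplicity, in increasing order: the list that
`eigDesc` reads from its end. -/
noncomputable def sortedEigenvalues (hM : M.IsHermitian) : List ℝ :=
  (Finset.univ.val.map hM.eigenvalues).sort (· ≤ ·)

lemma pairwise_sortedEigenvalues (hM : M.IsHermitian) :
    (sortedEigenvalues hM).Pairwise (· ≤ ·) :=
  Multiset.pairwise_sort _ _

lemma length_sortedEigenvalues (hM : M.IsHermitian) :
    (sortedEigenvalues hM).length = Fintype.card m := by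
  rw [sortedEigenvalues, Multiset.length_sort, Multiset.card_map, Finset.card_val,
    Finset.card_univ]

lemma countP_sortedEigenvalues (hM : M.IsHermitian) (p : ℝ → Prop) [DecidablePred p] :
    (sortedEigenvalues hM).countP (p ·) = Finset.card {i | p (hM.eigenvalues i)} := by
  rw [sortedEigenvalues, ← Multiset.coe_countP, Multiset.sort_eq, Multiset.countP_map]
  rfl

lemma eigDesc_eq_getElem_sortedEigenvalues (hM : M.IsHermitian) {j : ℕ}
    (hlt : Fintype.card m - j < (sortedEigenvalues hM).length) :
    eigDesc M j = (sortedEigenvalues hM)[Fintype.card m - j] := by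
  rw [eigDesc, dif_pos hM]
  exact List.getD_eq_getElem _ _ hlt

lemma le_card_eigDesc_le_eigenvalues (hM : M.IsHermitian) {j : ℕ} (hj : 1 ≤ j)
    (hjm : j ≤ Fintype.card m) : j ≤ Finset.card {i | eigDesc M j ≤ hM.eigenvalues i} := by
  have hlt : Fintype.card m - j < (sortedEigenvalues hM).length := by
    rw [length_sortedEigenvalues]
    omega
  have hcount := length_le_add_countP_of_forall_getElem_le (p := (eigDesc M j ≤ ·))
    (pairwise_sortedEigenvalues hM) hlt fun x hx =>
      decide_eq_true ((eigDesc_eq_getElem_sortedEigenvalues hM hlt).trans_le hx)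
  rw [length_sortedEigenvalues, countP_sortedEigenvalues] at hcount
  omega

lemma card_lt_add_card_eigenvalues_le_eigDesc (hM : M.IsHermitian) {j : ℕ} (hj : 1 ≤ j)
    (hjm : j ≤ Fintype.card m) :
    Fintype.card m < j + Finset.card {i | hM.eigenvalues i ≤ eigDesc M j} := by
  have hlt : Fintype.card m - j < (sortedEigenvalues hM).length := by
    rw [length_sortedEigenvalues]
    omega
  have hcount := lt_countP_of_forall_le_getElem (p := (· ≤ eigDesc M j))
    (pairwise_sortedEigenvalues hM) hlt fun x hx =>
      decide_eq_true (hx.trans_eq (eigDesc_eq_getElem_sortedEigenvalues hM hlt).symm)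
  rw [countP_sortedEigenvalues] at hcount
  omega

lemma eigDesc_nonneg (hM : M.PosSemidef) {j : ℕ} (hj : 1 ≤ j) (hjm : j ≤ Fintype.card m) :
    0 ≤ eigDesc M j := by
  have hcard := card_lt_add_card_eigenvalues_le_eigDesc hM.1 hj hjm
  obtain ⟨i, hi⟩ := Finset.card_pos.mp (by omega :
    0 < Finset.card {i | hM.1.eigenvalues i ≤ eigDesc M j})
  exact (hM.eigenvalues_nonneg i).trans (Finset.mem_filter.mp hi).2

lemma exists_eigDesc_le_rayleigh_and_rayleigh_le (hN : N.IsHermitian) (hM : M.PosSemidef)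
    (H : Matrix m m ℂ) {j : ℕ} (hj : 1 ≤ j) (hjm : j ≤ Fintype.card m) :
    ∃ y, eigDesc N j ≤ rayleigh N y ∧ rayleigh M (𝓛 H y) ≤ eigDesc M j := by
  let S := Submodule.span ℂ (hN.eigenvectorBasis ''
    ({i | eigDesc N j ≤ hN.eigenvalues i} : Finset m))
  let T := Submodule.span ℂ (hM.1.eigenvectorBasis ''
    ({i | hM.1.eigenvalues i ≤ eigDesc M j} : Finset m))
  have hdim : Module.finrank ℂ (EuclideanSpace ℂ m) < Module.finrank ℂ S + Module.finrank ℂ T := by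
    rw [finrank_euclideanSpace,
      finrank_span_image_finset hN.eigenvectorBasis.orthonormal.linearIndependent,
      finrank_span_image_finset hM.1.eigenvectorBasis.orthonormal.linearIndependent]
    have hS := le_card_eigDesc_le_eigenvalues hN hj hjm
    have hT := card_lt_add_card_eigenvalues_le_eigDesc hM.1 hj hjm
    omega
  obtain ⟨y, hyS, hy, hyT⟩ := exists_mem_ne_zero_map_mem (𝓛 H).toLinearMap hdim
  refine ⟨y, le_rayleighQuotient_of_mem_span (toEuclideanCLM_eigenvectorBasis hN)
    (fun _ hi => (Finset.mem_filter.mp hi).2) hyS hy, ?_⟩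
  rcases eq_or_ne (𝓛 H y) 0 with hHy | hHy
  · rw [hHy, rayleigh, ContinuousLinearMap.rayleighQuotient_apply_zero]
    exact eigDesc_nonneg hM hj hjm
  · exact rayleighQuotient_le_of_mem_span (toEuclideanCLM_eigenvectorBasis hM.1)
      (fun _ hi => (Finset.mem_filter.mp hi).2) hyT hHy

lemma matPow_eq_cfc (hA : A.PosSemidef) (s : ℝ) : matPow A s = cfc (fun x : ℝ => x ^ s) A := by
  rw [hA.1.cfc_eq, matPow, dif_pos hA]
  rfl

lemma matPow_posSemidef (hA : A.PosSemidef) (s : ℝ) : (matPow A s).PosSemidef := by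
  rw [matPow, dif_pos hA]
  refine PosSemidef.mul_mul_conjTranspose_same (PosSemidef.diagonal fun i => ?_) _
  exact Complex.zero_le_real.mpr (Real.rpow_nonneg (hA.eigenvalues_nonneg i) s)

lemma matPow_mul_matPow (hA : A.PosSemidef) {s u : ℝ} (hs : 0 ≤ s) (hu : 0 ≤ u) :
    matPow A s * matPow A u = matPow A (s + u) := by
  have hcont : ∀ r : ℝ, 0 ≤ r → ContinuousOn (fun x : ℝ => x ^ r) (spectrum ℝ A) :=
    fun r hr => (Real.continuous_rpow_const hr).continuousOn
  rw [matPow_eq_cfc hA, matPow_eq_cfc hA, matPow_eq_cfc hA,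
    ← cfc_mul _ _ A (hcont s hs) (hcont u hu)]
  refine cfc_congr fun x hx => ?_
  obtain ⟨i, rfl⟩ := hA.1.spectrum_real_eq_range_eigenvalues ▸ hx
  exact (Real.rpow_add_of_nonneg (hA.eigenvalues_nonneg i) hs hu).symm

lemma toEuclideanCLM_matPow_eigenvectorBasis (hA : A.PosSemidef) (s : ℝ) (i : m) :
    𝓛 (matPow A s) (hA.1.eigenvectorBasis i) =
      ((hA.1.eigenvalues i ^ s : ℝ) : ℂ) • hA.1.eigenvectorBasis i := by
  apply WithLp.ofLp_injective 2
  rw [ofLp_toEuclideanCLM, matPow, dif_pos hA, ← mulVec_mulVec, ← star_eq_conjTranspose,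
    hA.1.star_eigenvectorUnitary_mulVec, ← mulVec_mulVec, diagonal_mulVec_single, ← smul_eq_mul,
    Pi.single_smul, mulVec_smul, hA.1.eigenvectorUnitary_mulVec, WithLp.ofLp_smul]

lemma rayleigh_matPow_le (hA : A.PosSemidef) {s : ℝ} (hs0 : 0 ≤ s) (hs1 : s ≤ 1)
    (x : EuclideanSpace ℂ m) : rayleigh (matPow A s) x ≤ rayleigh A x ^ s := by
  rcases eq_or_ne x 0 with rfl | hx
  · rw [rayleigh, rayleigh, ContinuousLinearMap.rayleighQuotient_apply_zero,
      ContinuousLinearMap.rayleighQuotient_apply_zero]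
    exact Real.rpow_nonneg le_rfl s
  have hweights : ∑ i, ‖inner ℂ (hA.1.eigenvectorBasis i) x‖ ^ 2 / ‖x‖ ^ 2 = 1 := by
    rw [← Finset.sum_div, OrthonormalBasis.sum_sq_norm_inner_right,
      div_self (pow_ne_zero 2 (norm_ne_zero_iff.mpr hx))]
  rw [rayleigh, rayleigh, rayleighQuotient_eq_sum (toEuclideanCLM_matPow_eigenvectorBasis hA s),
    rayleighQuotient_eq_sum (toEuclideanCLM_eigenvectorBasis hA.1)]
  exact (Real.concaveOn_rpow hs0 hs1).le_map_sum (fun i _ => by positivity) hweights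
    fun i _ => hA.eigenvalues_nonneg i

theorem stmt5_general (hA : A.PosSemidef) (hB : B.PosSemidef) {t : ℝ} (ht0 : 0 ≤ t) (ht1 : t ≤ 1)
    {j : ℕ} (hj : 1 ≤ j) (hjm : j ≤ Fintype.card m) :
    eigDesc (matPow A ((1 - t) / 2) * matPow B t * matPow A ((1 - t) / 2)) j ≤
      eigDesc ((1 - t) • A + t • B) j := by
  set H := matPow A ((1 - t) / 2) with hH
  have ht : 0 ≤ 1 - t := sub_nonneg.mpr ht1
  have hHH : Hᴴ = H := (matPow_posSemidef hA _).1
  have hHsq : H * Hᴴ = matPow A (1 - t) := by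
    rw [hHH, hH, matPow_mul_matPow hA (by positivity) (by positivity), add_halves]
  have hN : (Hᴴ * matPow B t * H).IsHermitian :=
    ((matPow_posSemidef hB t).conjTranspose_mul_mul_same H).1
  obtain ⟨y, hNy, hMy⟩ := exists_eigDesc_le_rayleigh_and_rayleigh_le hN
    ((hA.smul ht).add (hB.smul ht0)) H hj hjm
  set x := 𝓛 H y
  calc eigDesc (H * matPow B t * H) j = eigDesc (Hᴴ * matPow B t * H) j := by rw [hHH]
    _ ≤ rayleigh (Hᴴ * matPow B t * H) y := hNy
    _ ≤ rayleigh (matPow A (1 - t)) x * rayleigh (matPow B t) x :=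
      hHsq ▸ rayleigh_conjTranspose_mul_mul_le H _ (rayleigh_nonneg (matPow_posSemidef hB t) x)
    _ ≤ rayleigh A x ^ (1 - t) * rayleigh B x ^ t :=
      mul_le_mul (rayleigh_matPow_le hA ht (by linarith) x) (rayleigh_matPow_le hB ht0 ht1 x)
        (rayleigh_nonneg (matPow_posSemidef hB t) x) (Real.rpow_nonneg (rayleigh_nonneg hA x) _)
    _ ≤ (1 - t) * rayleigh A x + t * rayleigh B x :=
      Real.geom_mean_le_arith_mean2_weighted ht ht0 (rayleigh_nonneg hA x) (rayleigh_nonneg hB x)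
        (by ring)
    _ = rayleigh ((1 - t) • A + t • B) x := by
      rw [rayleigh_add, rayleigh_real_smul, rayleigh_real_smul]
    _ ≤ eigDesc ((1 - t) • A + t • B) j := hMy

end Matrix

/-- For positive semidefinite `A, B` and `t ∈ [0,1]`,
`λ_j((1-t)A + tB) ≥ λ_j(A^{(1-t)/2} B^t A^{(1-t)/2})` for all `j`. -/
theorem stmt5 {n : ℕ} (A B : Matrix (Fin n) (Fin n) ℂ)
    (hA : A.PosSemidef) (hB : B.PosSemidef) (t : ℝ) (ht0 : 0 ≤ t) (ht1 : t ≤ 1) :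
    ∀ j : ℕ, 1 ≤ j → j ≤ n →
      eigDesc (matPow A ((1 - t) / 2) * matPow B t * matPow A ((1 - t) / 2)) j ≤
        eigDesc ((1 - t) • A + t • B) j :=
  fun _ hj hjn => stmt5_general hA hB ht0 ht1 hj (by rwa [Fintype.card_fin])
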